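/- arXiv:2209.13580 — 2 statements merged into one kernel-verified Lean document; each statement's English description precedes it below -/
import Mathlib

section
/- Let A be a commutative complex Banach algebra, φ ∈ Δ(A), and d a nonzero element of A*. Then d is a continuous point derivation at φ if and only if 𝔇_{d,φ} is a continuous derivation from A into A* that is not inner. -/
/-- `D : A →L[ℂ] A →L[ℂ] ℂ` (viewed as a continuous linear map `A → A*`) is a
derivation: `D(ab) = D(a)·b + a·D(b)`, where `⟨F·a, x⟩ = ⟨F, ax⟩` and
`⟨a·F, x⟩ = ⟨F, xa⟩`. -/
def IsDerivation {A : Type*} [NonUnitalNormedRing A] [NormedSpace ℂ A]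
    (D : A →L[ℂ] A →L[ℂ] ℂ) : Prop :=
  ∀ a b x : A, D (a * b) x = D a (b * x) + D b (x * a)

/-- `D` is inner: `D = ad_F` for some `F ∈ A*`, i.e. `⟨D(a), b⟩ = F(ab) - F(ba)`. -/
def IsInnerDerivation {A : Type*} [NonUnitalNormedRing A] [NormedSpace ℂ A]
    (D : A →L[ℂ] A →L[ℂ] ℂ) : Prop :=
  ∃ F : A →L[ℂ] ℂ, ∀ a b : A, D a b = F (a * b) - F (b * a)

/-- `D` is cyclic: `⟨D(a), b⟩ + ⟨D(b), a⟩ = 0`. -/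
def IsCyclicDerivation {A : Type*} [NonUnitalNormedRing A] [NormedSpace ℂ A]
    (D : A →L[ℂ] A →L[ℂ] ℂ) : Prop :=
  ∀ a b : A, D a b + D b a = 0

/-- `A` is weakly amenable: every continuous derivation `A → A*` is inner. -/
def WeaklyAmenable (A : Type*) [NonUnitalNormedRing A] [NormedSpace ℂ A] : Prop :=
  ∀ D : A →L[ℂ] A →L[ℂ] ℂ, IsDerivation D → IsInnerDerivation D

/-- `A` is cyclically amenable: every continuous cyclic derivation `A → A*` is inner. -/
def CyclicallyAmenable (A : Type*) [NonUnitalNormedRing A] [NormedSpace ℂ A] : Prop :=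
  ∀ D : A →L[ℂ] A →L[ℂ] ℂ, IsDerivation D → IsCyclicDerivation D → IsInnerDerivation D

/-- `A` is cyclically weakly amenable: every continuous derivation `A → A*` is cyclic. -/
def CyclicallyWeaklyAmenable (A : Type*) [NonUnitalNormedRing A] [NormedSpace ℂ A] : Prop :=
  ∀ D : A →L[ℂ] A →L[ℂ] ℂ, IsDerivation D → IsCyclicDerivation D

/-- `A` is essential: the linear span of products is dense in `A`. -/
def Essential (A : Type*) [NonUnitalNormedRing A] [NormedSpace ℂ A] : Prop :=
  Dense ((Submodule.span ℂ {x : A | ∃ a b : A, a * b = x} : Submodule ℂ A) : Set A)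

/-- `φ` is a character of `A`, i.e. `φ ∈ Δ(A)`: a nonzero multiplicative linear
functional (characters on Banach algebras are automatically continuous). -/
def IsCharacter {A : Type*} [NonUnitalNormedRing A] [NormedSpace ℂ A]
    (φ : A →L[ℂ] ℂ) : Prop :=
  φ ≠ 0 ∧ ∀ a b : A, φ (a * b) = φ a * φ b

/-- `d ∈ A*` is a continuous point derivation at `φ`. -/
def IsPointDerivation {A : Type*} [NonUnitalNormedRing A] [NormedSpace ℂ A]
    (φ d : A →L[ℂ] ℂ) : Prop :=
  ∀ a b : A, d (a * b) = d a * φ b + φ a * d b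

/-- `A` is point amenable: every continuous point derivation at some `φ ∈ Δ(A)` is zero. -/
def PointAmenable (A : Type*) [NonUnitalNormedRing A] [NormedSpace ℂ A] : Prop :=
  ∀ φ d : A →L[ℂ] ℂ, IsCharacter φ → IsPointDerivation φ d → d = 0

/-- `A` is 0-point amenable: every continuous point derivation at some
`φ ∈ Δ₀(A) = Δ(A) ∪ {0}` is zero. -/
def ZeroPointAmenable (A : Type*) [NonUnitalNormedRing A] [NormedSpace ℂ A] : Prop :=
  ∀ φ d : A →L[ℂ] ℂ, (IsCharacter φ ∨ φ = 0) → IsPointDerivation φ d → d = 0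

/-!
Write `D` for the operator `a ↦ d(a) φ`. Since `φ` is multiplicative, the derivation identity for
`D` evaluated at `x` is the point derivation identity for `d` multiplied by `φ(x)`, and `φ(x)` can
be cancelled for a suitable `x`. An inner derivation is antisymmetric as a bilinear form, whereas
a form `d(a) φ(b)` of rank one is not.
-/

section

variable {A : Type*} [NonUnitalNormedRing A] [NormedSpace ℂ A]

theorem smulRight_dual_apply (d φ : A →L[ℂ] ℂ) (a b : A) :
    d.smulRight φ a b = d a * φ b :=
  rfl

theorem IsCharacter.isDerivation_smulRight_iff {φ : A →L[ℂ] ℂ} (hφ : IsCharacter φ)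
    (d : A →L[ℂ] ℂ) :
    IsDerivation (d.smulRight φ) ↔ IsPointDerivation φ d := by
  obtain ⟨φ_ne_zero, φ_mul⟩ := hφ
  have leibniz_at (a b x : A) :
      d.smulRight φ a (b * x) + d.smulRight φ b (x * a) = (d a * φ b + φ a * d b) * φ x := by
    simp only [smulRight_dual_apply, φ_mul]
    ring
  constructor
  · intro hD a b
    obtain ⟨x, hx⟩ := DFunLike.ne_iff.mp φ_ne_zero
    apply mul_right_cancel₀ hx
    rw [← leibniz_at, ← hD, smulRight_dual_apply]
  · intro hd a b x
    rw [leibniz_at, ← hd, smulRight_dual_apply]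

theorem IsInnerDerivation.isCyclicDerivation {D : A →L[ℂ] A →L[ℂ] ℂ}
    (hD : IsInnerDerivation D) : IsCyclicDerivation D := by
  obtain ⟨F, hF⟩ := hD
  intro a b
  rw [hF, hF, sub_add_sub_cancel, sub_self]

theorem IsCyclicDerivation.eq_zero_or_eq_zero_of_smulRight {d φ : A →L[ℂ] ℂ}
    (hD : IsCyclicDerivation (d.smulRight φ)) : d = 0 ∨ φ = 0 := by
  have antisymm (a b : A) : d a * φ b = -(d b * φ a) := eq_neg_of_add_eq_zero_left (hD a b)
  refine or_iff_not_imp_right.mpr fun φ_ne_zero ↦ ContinuousLinearMap.ext fun y ↦ ?_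
  obtain ⟨x, hx⟩ := DFunLike.ne_iff.mp φ_ne_zero
  have dx_eq_zero : d x = 0 :=
    (mul_eq_zero_iff_right hx).mp (self_eq_neg.mp (antisymm x x))
  have dy_mul_eq_zero : d y * φ x = 0 := by
    rw [antisymm, dx_eq_zero, zero_mul, neg_zero]
  exact (mul_eq_zero_iff_right hx).mp dy_mul_eq_zero

theorem isInnerDerivation_smulRight_iff {d φ : A →L[ℂ] ℂ} :
    IsInnerDerivation (d.smulRight φ) ↔ d = 0 ∨ φ = 0 := by
  constructor
  · exact fun hD ↦ hD.isCyclicDerivation.eq_zero_or_eq_zero_of_smulRight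
  · rintro (rfl | rfl) <;> exact ⟨0, fun a b ↦ by simp⟩

theorem isPointDerivation_iff_smulRight_not_inner_general
    (φ d : A →L[ℂ] ℂ) (hφ : IsCharacter φ) (hd : d ≠ 0) :
    IsPointDerivation φ d ↔
      (IsDerivation (d.smulRight φ) ∧ ¬ IsInnerDerivation (d.smulRight φ)) := by
  have not_inner : ¬ IsInnerDerivation (d.smulRight φ) :=
    isInnerDerivation_smulRight_iff.not.mpr (not_or_intro hd hφ.1)
  rw [hφ.isDerivation_smulRight_iff, and_iff_left not_inner]

end

/-- For a commutative Banach algebra `A`, `φ ∈ Δ(A)` and a nonzero `d ∈ A*`: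
`d` is a continuous point derivation at `φ` iff `𝔇_{d,φ}` is a continuous
derivation `A → A*` which is not inner. -/
theorem isPointDerivation_iff_smulRight_not_inner
    {A : Type*} [NonUnitalNormedCommRing A] [NormedSpace ℂ A]
    [IsScalarTower ℂ A A] [SMulCommClass ℂ A A] [CompleteSpace A]
    (φ d : A →L[ℂ] ℂ) (hφ : IsCharacter φ) (hd : d ≠ 0) :
    IsPointDerivation φ d ↔
      (IsDerivation (d.smulRight φ) ∧ ¬ IsInnerDerivation (d.smulRight φ)) :=
  isPointDerivation_iff_smulRight_not_inner_general φ d hφ hd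
end

section
/- Let A be a unital complex Banach algebra with identity 1, φ ∈ Δ(A), and d a nonzero element of A*. Then the following are equivalent: (a) d is a continuous point derivation at φ; (b) 𝔇_{d,φ} is a continuous derivation from A into A* that is not inner; (c) 𝔇_{d,φ} is a continuous derivation from A into A* that is not cyclic; (d) d(1) = 0 and d(xy) = 0 for all x, y ∈ ker φ. -/
/-!
The operator `𝔇_{d,φ}(a) = d(a) φ` is a derivation precisely when `d` is a point derivation at `φ`:
pair the derivation identity with any `x` such that `φ x ≠ 0`. Inner and cyclic derivations share
the property `⟨D(a), a⟩ = 0`, whereas `⟨𝔇_{d,φ}(a), a⟩ = d(a) φ(a)` cannot vanish identically, since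
`A` is not the union of the two proper subspaces `ker d` and `ker φ`. Condition (d) comes from the
decomposition `A = ℂ1 ⊕ ker φ`.
-/

theorem eq_zero_or_eq_zero_of_forall_mul_eq_zero {F M R : Type*} [AddZeroClass M]
    [NonUnitalNonAssocSemiring R] [NoZeroDivisors R] [FunLike F M R] [AddMonoidHomClass F M R]
    {f g : F} (h : ∀ a, f a * g a = 0) : (∀ a, f a = 0) ∨ ∀ a, g a = 0 := by
  by_contra! hne
  obtain ⟨⟨a, hfa⟩, b, hgb⟩ := hne
  have hga : g a = 0 := (mul_eq_zero.mp (h a)).resolve_left hfa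
  have hfb : f b = 0 := (mul_eq_zero.mp (h b)).resolve_right hgb
  have hab : f a * g b = 0 := by simpa only [map_add, hga, hfb, add_zero, zero_add] using h (a + b)
  exact mul_ne_zero hfa hgb hab

theorem exists_smulRight_apply_self_ne_zero {𝕜 E : Type*} [NontriviallyNormedField 𝕜]
    [SeminormedAddCommGroup E] [NormedSpace 𝕜 E] {f g : E →L[𝕜] 𝕜} (hf : f ≠ 0) (hg : g ≠ 0) :
    ∃ a, f.smulRight g a a ≠ 0 := by
  by_contra! h
  rcases eq_zero_or_eq_zero_of_forall_mul_eq_zero h with hf' | hg'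
  · exact hf (ContinuousLinearMap.ext hf')
  · exact hg (ContinuousLinearMap.ext hg')

theorem map_sub_smul_one_mul_sub_smul_one {F R A : Type*} [CommRing R] [Ring A] [Algebra R A]
    [FunLike F A R] [LinearMapClass F R A R] {d : F} (hd : d 1 = 0) (a b : A) (r s : R) :
    d ((a - r • 1) * (b - s • 1)) = d (a * b) - (d a * s + r * d b) := by
  simp only [sub_mul, mul_sub, smul_mul_assoc, mul_smul_comm, one_mul, mul_one, map_sub, map_smul,
    hd, smul_eq_mul]
  ring

section NonUnital

variable {A : Type*} [NonUnitalNormedRing A] [NormedSpace ℂ A]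

theorem IsInnerDerivation.apply_self {D : A →L[ℂ] A →L[ℂ] ℂ} (hD : IsInnerDerivation D) (a : A) :
    D a a = 0 := by
  obtain ⟨F, hF⟩ := hD
  rw [hF, sub_self]

theorem IsCyclicDerivation.apply_self {D : A →L[ℂ] A →L[ℂ] ℂ} (hD : IsCyclicDerivation D) (a : A) :
    D a a = 0 :=
  add_self_eq_zero.mp (hD a a)

theorem not_isInnerDerivation_smulRight {φ d : A →L[ℂ] ℂ} (hφ : φ ≠ 0) (hd : d ≠ 0) :
    ¬ IsInnerDerivation (d.smulRight φ) := fun h ↦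
  let ⟨a, ha⟩ := exists_smulRight_apply_self_ne_zero hd hφ
  ha (h.apply_self a)

theorem not_isCyclicDerivation_smulRight {φ d : A →L[ℂ] ℂ} (hφ : φ ≠ 0) (hd : d ≠ 0) :
    ¬ IsCyclicDerivation (d.smulRight φ) := fun h ↦
  let ⟨a, ha⟩ := exists_smulRight_apply_self_ne_zero hd hφ
  ha (h.apply_self a)

theorem IsCharacter.isPointDerivation_iff_isDerivation_smulRight {φ d : A →L[ℂ] ℂ}
    (hφ : IsCharacter φ) : IsPointDerivation φ d ↔ IsDerivation (d.smulRight φ) := by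
  obtain ⟨hφ_ne, hφ_mul⟩ := hφ
  have defect (a b x : A) :
      d.smulRight φ (a * b) x - (d.smulRight φ a (b * x) + d.smulRight φ b (x * a)) =
        (d (a * b) - (d a * φ b + φ a * d b)) * φ x := by
    simp only [ContinuousLinearMap.smulRight_apply, smul_apply, smul_eq_mul, hφ_mul]
    ring
  constructor
  · intro h a b x
    rw [← sub_eq_zero, defect, sub_eq_zero.mpr (h a b), zero_mul]
  · intro h a b
    obtain ⟨x, hx⟩ : ∃ x, φ x ≠ 0 := DFunLike.ne_iff.mp hφ_ne
    have hzero := defect a b x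
    rw [sub_eq_zero.mpr (h a b x)] at hzero
    exact sub_eq_zero.mp ((mul_eq_zero.mp hzero.symm).resolve_right hx)

end NonUnital

section Unital

variable {A : Type*} [NormedRing A] [NormedAlgebra ℂ A] {φ d : A →L[ℂ] ℂ}

theorem IsCharacter.map_one (hφ : IsCharacter φ) : φ 1 = 1 := by
  obtain ⟨a, ha⟩ : ∃ a, φ a ≠ 0 := DFunLike.ne_iff.mp hφ.1
  exact (mul_eq_left₀ ha).mp (by rw [← hφ.2, mul_one])

theorem isPointDerivation_iff_map_one_eq_zero_and_map_mul_eq_zero (hφ : φ 1 = 1) :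
    IsPointDerivation φ d ↔ d 1 = 0 ∧ ∀ x y : A, φ x = 0 → φ y = 0 → d (x * y) = 0 := by
  constructor
  · intro h
    have h_one : d 1 = d 1 + d 1 := by simpa only [hφ, one_mul, mul_one] using h 1 1
    exact ⟨left_eq_add.mp h_one, fun x y hx hy ↦ by rw [h, hx, hy, mul_zero, zero_mul, add_zero]⟩
  · rintro ⟨hd, h⟩ a b
    have sub_mem_ker (x : A) : φ (x - φ x • 1) = 0 := by
      rw [map_sub, map_smul, hφ, smul_eq_mul, mul_one, sub_self]
    have hab := h _ _ (sub_mem_ker a) (sub_mem_ker b)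
    rw [map_sub_smul_one_mul_sub_smul_one hd] at hab
    exact sub_eq_zero.mp hab

end Unital

theorem isPointDerivation_tfae_unital_general
    {A : Type*} [NormedRing A] [NormedAlgebra ℂ A]
    (φ d : A →L[ℂ] ℂ) (hφ : IsCharacter φ) (hd : d ≠ 0) :
    (IsPointDerivation φ d ↔
      (IsDerivation (d.smulRight φ) ∧ ¬ IsInnerDerivation (d.smulRight φ))) ∧
    (IsPointDerivation φ d ↔
      (IsDerivation (d.smulRight φ) ∧ ¬ IsCyclicDerivation (d.smulRight φ))) ∧
    (IsPointDerivation φ d ↔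
      (d 1 = 0 ∧ ∀ x y : A, φ x = 0 → φ y = 0 → d (x * y) = 0)) := by
  have h_deriv := hφ.isPointDerivation_iff_isDerivation_smulRight (d := d)
  have h_inner := not_isInnerDerivation_smulRight hφ.1 hd
  have h_cyclic := not_isCyclicDerivation_smulRight hφ.1 hd
  exact ⟨h_deriv.trans (and_iff_left h_inner).symm, h_deriv.trans (and_iff_left h_cyclic).symm,
    isPointDerivation_iff_map_one_eq_zero_and_map_mul_eq_zero hφ.map_one⟩

/-- For a unital Banach algebra `A`, `φ ∈ Δ(A)` and a nonzero `d ∈ A*`, the following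
are equivalent: (a) `d` is a continuous point derivation at `φ`; (b) `𝔇_{d,φ}` is a
non-inner continuous derivation; (c) `𝔇_{d,φ}` is a non-cyclic continuous derivation;
(d) `d(1) = 0` and `d` vanishes on products of elements of `ker φ`. -/
theorem isPointDerivation_tfae_unital
    {A : Type*} [NormedRing A] [NormedAlgebra ℂ A] [CompleteSpace A]
    (φ d : A →L[ℂ] ℂ) (hφ : IsCharacter φ) (hd : d ≠ 0) :
    (IsPointDerivation φ d ↔
      (IsDerivation (d.smulRight φ) ∧ ¬ IsInnerDerivation (d.smulRight φ))) ∧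
    (IsPointDerivation φ d ↔
      (IsDerivation (d.smulRight φ) ∧ ¬ IsCyclicDerivation (d.smulRight φ))) ∧
    (IsPointDerivation φ d ↔
      (d 1 = 0 ∧ ∀ x y : A, φ x = 0 → φ y = 0 → d (x * y) = 0)) :=
  isPointDerivation_tfae_unital_general φ d hφ hd
end
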